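/- Let G be a finite simple graph on [n] with no isolated vertices and let 1 ≤ k ≤ ν(G) be such that I(G)^{[k]} has linear quotients. If g_{I(G)}(k) = 0 (i.e. depth(S/I(G)^{[k]}) = 2k − 1), then G has a dominating k-matching. In particular, this holds for every cochordal graph G with no isolated vertices. -/

import Mathlib

open MvPolynomial

section Preamble

variable (K : Type*) [Field K] {σ : Type*} [Fintype σ] [DecidableEq σ]

/-- A (monic) monomial of the polynomial ring. -/
def IsMonomial (f : MvPolynomial σ K) : Prop :=
  ∃ d : σ →₀ ℕ, f = monomial d 1

/-- An ideal generated by monomials. -/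
def IsMonomialIdeal (I : Ideal (MvPolynomial σ K)) : Prop :=
  ∃ A : Set (MvPolynomial σ K), (∀ u ∈ A, IsMonomial K u) ∧ I = Ideal.span A

/-- The unique minimal set of monomial generators `G(I)` of a monomial ideal:
the monomials of `I` that are minimal with respect to divisibility. -/
def minGens (I : Ideal (MvPolynomial σ K)) : Set (MvPolynomial σ K) :=
  {u | IsMonomial K u ∧ u ∈ I ∧ ∀ v, IsMonomial K v → v ∈ I → v ∣ u → v = u}

/-- A squarefree monomial ideal. -/
def IsSqfreeMonomialIdeal (I : Ideal (MvPolynomial σ K)) : Prop :=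
  IsMonomialIdeal K I ∧ ∀ u ∈ minGens K I, Squarefree u

/-- The `k`-th squarefree power `I^{[k]}`: the ideal generated by the squarefree
products of `k` minimal monomial generators of `I`. -/
noncomputable def sqPow (I : Ideal (MvPolynomial σ K)) (k : ℕ) : Ideal (MvPolynomial σ K) :=
  Ideal.span {u | Squarefree u ∧ ∃ l : List (MvPolynomial σ K),
    l.length = k ∧ (∀ f ∈ l, f ∈ minGens K I) ∧ u = l.prod}

/-- `ν(I)`: the maximum length of a regular sequence of monomials in `I`. -/
noncomputable def monNu (I : Ideal (MvPolynomial σ K)) : ℕ :=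
  sSup {m | ∃ l : List (MvPolynomial σ K), l.length = m ∧
    (∀ f ∈ l, IsMonomial K f ∧ f ∈ I) ∧
    RingTheory.Sequence.IsRegular (MvPolynomial σ K) l}

/-- The minimal degree `d` of a minimal monomial generator of `I`
(so `d_k = minDeg (I^{[k]})`). -/
noncomputable def minDeg (I : Ideal (MvPolynomial σ K)) : ℕ :=
  sInf (totalDegree '' minGens K I)

/-- `depth(S/I)`: the maximum length of an `S/I`-regular sequence of elements of
the graded maximal ideal `(x_1, …, x_n)`. -/
noncomputable def qdepth (I : Ideal (MvPolynomial σ K)) : ℕ :=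
  sSup {m | ∃ l : List (MvPolynomial σ K), l.length = m ∧
    (∀ f ∈ l, f ∈ Ideal.span (Set.range (X : σ → MvPolynomial σ K))) ∧
    RingTheory.Sequence.IsRegular (MvPolynomial σ K ⧸ I) l}

/-- `I` has linear quotients with respect to the ordering `L` of its minimal
monomial generators: each successive colon ideal is generated by variables. -/
def HasLinearQuotientsOrder (I : Ideal (MvPolynomial σ K))
    (L : List (MvPolynomial σ K)) : Prop :=
  L.Nodup ∧ (∀ u, u ∈ L ↔ u ∈ minGens K I) ∧
  ∀ i : Fin L.length, 0 < (i : ℕ) →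
    ∃ A : Set σ,
      Submodule.colon (Ideal.span {u | u ∈ L.take (i : ℕ)}) (Ideal.span {L.get i})
        = Ideal.span (X '' A)

/-- A monomial ideal with linear quotients. -/
def HasLinearQuotients (I : Ideal (MvPolynomial σ K)) : Prop :=
  ∃ L, HasLinearQuotientsOrder K I L

/-- A polymatroidal ideal: a monomial ideal generated in a single degree whose
minimal generators satisfy the exchange property. -/
def IsPolymatroidal (I : Ideal (MvPolynomial σ K)) : Prop :=
  IsMonomialIdeal K I ∧
  (∃ d, ∀ u ∈ minGens K I, totalDegree u = d) ∧
  ∀ u ∈ minGens K I, ∀ v ∈ minGens K I, ∀ k : σ,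
    degreeOf k v < degreeOf k u →
    ∃ l : σ, degreeOf l u < degreeOf l v ∧
      ∃ w, u = X k * w ∧ X l * w ∈ minGens K I

/-- A matroidal ideal: a polymatroidal ideal all of whose minimal generators are
squarefree. -/
def IsMatroidal (I : Ideal (MvPolynomial σ K)) : Prop :=
  IsPolymatroidal K I ∧ ∀ u ∈ minGens K I, Squarefree u

/-- The squarefree part of a monomial ideal: the ideal generated by its squarefree
minimal generators. -/
noncomputable def sqfPart (I : Ideal (MvPolynomial σ K)) : Ideal (MvPolynomial σ K) :=
  Ideal.span {u | u ∈ minGens K I ∧ Squarefree u}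

/-- The squarefree Veronese ideal `𝔪^{[d]}`, generated by all squarefree
monomials of degree `d`. -/
noncomputable def veronese (d : ℕ) : Ideal (MvPolynomial σ K) :=
  Ideal.span {u | ∃ F : Finset σ, F.card = d ∧ u = ∏ i ∈ F, X i}

/-- A chordal graph: no induced cycle of length greater than 3. -/
def IsChordal {V : Type*} (G : SimpleGraph V) : Prop :=
  ∀ m : ℕ, 4 ≤ m → ¬ ∃ f : ZMod m → V, Function.Injective f ∧
    ∀ i j : ZMod m, G.Adj (f i) (f j) ↔ (i = j + 1 ∨ j = i + 1)

/-- A matching of `G`: a finite set of pairwise vertex-disjoint edges of `G`. -/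
def IsMatching (G : SimpleGraph σ) (M : Finset (Sym2 σ)) : Prop :=
  (↑M ⊆ G.edgeSet) ∧ (M : Set (Sym2 σ)).Pairwise fun e f => ∀ v, v ∈ e → v ∉ f

/-- A `k`-matching of `G`. -/
def IsKMatching (G : SimpleGraph σ) (M : Finset (Sym2 σ)) (k : ℕ) : Prop :=
  IsMatching G M ∧ M.card = k

/-- The vertex set `V(M)` of a matching. -/
def mVerts (M : Finset (Sym2 σ)) : Finset σ :=
  Finset.univ.filter fun v => ∃ e ∈ M, v ∈ e

/-- The squarefree monomial `∏_{v ∈ V(M)} x_v` attached to a matching. -/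
noncomputable def matchMon (M : Finset (Sym2 σ)) : MvPolynomial σ K :=
  ∏ v ∈ mVerts M, X v

/-- The edge ideal `I(G)` of a finite simple graph `G`. -/
noncomputable def edgeIdeal (G : SimpleGraph σ) : Ideal (MvPolynomial σ K) :=
  Ideal.span {u | ∃ i j, G.Adj i j ∧ u = X i * X j}

/-- The `k`-th squarefree power `I(G)^{[k]}` of the edge ideal, generated by the
monomials `∏_{v ∈ V(M)} x_v` of the `k`-matchings `M` of `G`. -/
noncomputable def matchPow (G : SimpleGraph σ) (k : ℕ) : Ideal (MvPolynomial σ K) :=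
  Ideal.span {u | ∃ M : Finset (Sym2 σ), IsKMatching G M k ∧ u = matchMon K M}

/-- The matching number `ν(G)`. -/
noncomputable def matchNum (G : SimpleGraph σ) : ℕ :=
  sSup {k | ∃ M : Finset (Sym2 σ), IsKMatching G M k}

end Preamble

/-!
Order the generators `x_{V(M)}` of `I(G)^{[k]}` so that the successive colon ideals are generated by
variables. A variable `x_c` of the colon ideal at `x_{V(M)}` comes from a `k`-matching `N` with
`V(N) ⊆ V(M) ∪ {c}`; the partner of `c` in `N` lies in `V(M)`, so `c` is a vertex outside `V(M)`
dominated by `M`. If no `k`-matching is dominating, every colon ideal therefore misses, besides the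
`2k` variables of `V(M)`, at least one more variable. The exact sequences
`0 → S/(J : u) → S/J → S/(J + (u)) → 0`, with depth read off from the vanishing of
`Ext^i(S/(x_1, …, x_n), -)`, then give `depth S/I(G)^{[k]} ≥ 2k`.

If `G` is cochordal, a perfect elimination order of the complement ranks the edges of `G` so that
every edge can be lowered by joining one of its endpoints to an endpoint of a given lower edge.
Given a `k`-matching `N` below `M`, delete from `M` the highest edge of the symmetric difference
and augment the rest by edges of `N`; lowering one edge where necessary, this produces a matching
below `M` that uses at most one new vertex, and that vertex is in `V(N)`. Hence the generators,
ordered by the lowest matching on their support, have linear quotients.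
-/

/-! ### Matchings and augmentation -/

section Matching

variable {σ : Type*} {G : SimpleGraph σ} {M N : Finset (Sym2 σ)}

lemma IsMatching.adj (hM : IsMatching G M) {v w : σ} (h : s(v, w) ∈ M) : G.Adj v w :=
  G.mem_edgeSet.1 (hM.1 h)

lemma IsMatching.eq_of_mem (hM : IsMatching G M) {e f : Sym2 σ} (he : e ∈ M) (hf : f ∈ M) {v : σ}
    (hve : v ∈ e) (hvf : v ∈ f) : e = f :=
  hM.2.eq he hf fun h ↦ h v hve hvf

lemma IsMatching.subset (hM : IsMatching G M) (h : N ⊆ M) : IsMatching G N :=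
  ⟨fun _ he ↦ hM.1 (h he), hM.2.mono h⟩

variable [Fintype σ] [DecidableEq σ]

lemma mem_mVerts {v : σ} : v ∈ mVerts M ↔ ∃ w, s(v, w) ∈ M := by
  simp only [mVerts, Finset.mem_filter, Finset.mem_univ, true_and, Sym2.mem_iff_exists]
  grind

lemma mem_mVerts_of_mem {e : Sym2 σ} (he : e ∈ M) {v : σ} (hv : v ∈ e) : v ∈ mVerts M :=
  Finset.mem_filter.2 ⟨Finset.mem_univ v, e, he, hv⟩

lemma left_mem_mVerts {v w : σ} (h : s(v, w) ∈ M) : v ∈ mVerts M :=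
  mem_mVerts_of_mem h (Sym2.mem_mk_left v w)

lemma right_mem_mVerts {v w : σ} (h : s(v, w) ∈ M) : w ∈ mVerts M :=
  mem_mVerts_of_mem h (Sym2.mem_mk_right v w)

lemma mVerts_mono (h : M ⊆ N) : mVerts M ⊆ mVerts N :=
  Finset.monotone_filter_right _ fun _ _ ⟨e, he, hv⟩ ↦ ⟨e, h he, hv⟩

lemma mVerts_union (M N : Finset (Sym2 σ)) : mVerts (M ∪ N) = mVerts M ∪ mVerts N := by
  ext v
  simp only [mem_mVerts, Finset.mem_union, exists_or]

lemma mVerts_insert (M : Finset (Sym2 σ)) (v w : σ) :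
    mVerts (insert s(v, w) M) = insert v (insert w (mVerts M)) := by
  ext u
  simp [mVerts, or_assoc]

lemma mVerts_eq_biUnion (M : Finset (Sym2 σ)) : mVerts M = M.biUnion Sym2.toFinset := by
  ext v
  simp [mVerts]

lemma IsMatching.mVerts_erase (hM : IsMatching G M) {v w : σ} (h : s(v, w) ∈ M) :
    mVerts (M.erase s(v, w)) = ((mVerts M).erase v).erase w := by
  ext u
  simp only [mVerts, Finset.mem_filter, Finset.mem_univ, true_and, Finset.mem_erase]
  constructor
  · rintro ⟨e, ⟨hne, he⟩, hu⟩
    have hu' : u ∉ s(v, w) := fun h' ↦ hne (hM.eq_of_mem he h hu h')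
    exact ⟨fun h' ↦ hu' (by simp [h']), fun h' ↦ hu' (by simp [h']), e, he, hu⟩
  · rintro ⟨huw, huv, e, he, hu⟩
    exact ⟨e, ⟨fun h' ↦ by simp_all, he⟩, hu⟩

lemma IsMatching.card_mVerts (hM : IsMatching G M) : (mVerts M).card = 2 * M.card := by
  have hcard : ∀ e ∈ M, e.toFinset.card = 2 := fun e he ↦
    e.card_toFinset_of_not_isDiag (G.not_isDiag_of_mem_edgeSet (hM.1 he))
  rw [mVerts_eq_biUnion, Finset.card_biUnion, Finset.sum_const_nat hcard, mul_comm]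
  exact fun e he f hf hne ↦ Finset.disjoint_left.2 fun v hve hvf ↦
    hM.2 he hf hne v (Sym2.mem_toFinset.1 hve) (Sym2.mem_toFinset.1 hvf)

protected lemma IsMatching.insert (hM : IsMatching G M) {v w : σ} (hvw : G.Adj v w)
    (hv : v ∉ mVerts M) (hw : w ∉ mVerts M) : IsMatching G (insert s(v, w) M) := by
  have hdisj : ∀ e ∈ M, ∀ u ∈ e, u ∉ s(v, w) := fun e he u hu hu' ↦ by
    rcases Sym2.mem_iff.1 hu' with rfl | rfl
    exacts [hv (mem_mVerts_of_mem he hu), hw (mem_mVerts_of_mem he hu)]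
  refine ⟨?_, ?_⟩
  · rw [Finset.coe_insert, Set.insert_subset_iff]
    exact ⟨hvw, hM.1⟩
  · rw [Finset.coe_insert]
    exact hM.2.insert fun e he _ ↦
      ⟨fun u hu hu' ↦ hdisj e he u hu' hu, fun u hu hu' ↦ hdisj e he u hu hu'⟩

lemma card_insert_of_notMem_mVerts {v w : σ} (hv : v ∉ mVerts M) :
    (insert s(v, w) M).card = M.card + 1 :=
  Finset.card_insert_of_notMem fun h ↦ hv (left_mem_mVerts h)

/-- The path `p`, `z`, `y` alternates between `N` and `M`: an augmentation of the rest is completed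
by `s(p, z)` or `s(z, y)`, depending on whether it already covers `y`. -/
lemma IsMatching.exists_augmentation_of_erase (hM : IsMatching G M) (hN : IsMatching G N)
    {p z y : σ} (hp : p ∉ mVerts M) (hpz : s(p, z) ∈ N) (hzy : s(z, y) ∈ M)
    {L : Finset (Sym2 σ)} (hL : IsMatching G L) (hLsub : L ⊆ M.erase s(z, y) ∪ N.erase s(p, z))
    (hcover : mVerts (M.erase s(z, y)) ⊆ mVerts L) :
    ∃ M' ⊆ M ∪ N, IsMatching G M' ∧ M'.card = L.card + 1 ∧ mVerts M ⊆ mVerts M' := by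
  have hLMN : L ⊆ M ∪ N :=
    hLsub.trans (Finset.union_subset_union (Finset.erase_subset _ _) (Finset.erase_subset _ _))
  have hVL := mVerts_mono hLsub
  rw [mVerts_union, hM.mVerts_erase hzy, hN.mVerts_erase hpz] at hVL
  rw [hM.mVerts_erase hzy] at hcover
  have hzL : z ∉ mVerts L := fun h ↦ by simpa using hVL h
  have hpL : p ∉ mVerts L := fun h ↦ by simpa [hp] using hVL h
  by_cases hyL : y ∈ mVerts L
  · refine ⟨insert s(p, z) L, Finset.insert_subset (Finset.mem_union_right M hpz) hLMN,
      hL.insert (hN.adj hpz) hpL hzL, card_insert_of_notMem_mVerts hpL, ?_⟩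
    rw [mVerts_insert]
    grind
  · refine ⟨insert s(z, y) L, Finset.insert_subset (Finset.mem_union_left N hzy) hLMN,
      hL.insert (hM.adj hzy) hzL hyL, card_insert_of_notMem_mVerts hzL, ?_⟩
    rw [mVerts_insert]
    grind

theorem IsMatching.exists_augmentation (hM : IsMatching G M) (hN : IsMatching G N)
    (hlt : M.card < N.card) :
    ∃ M' ⊆ M ∪ N, IsMatching G M' ∧ M'.card = M.card + 1 ∧ mVerts M ⊆ mVerts M' := by
  induction hn : M.card generalizing M N with
  | zero =>
    obtain ⟨e, he⟩ : N.Nonempty := Finset.card_pos.1 (by lia)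
    obtain rfl := Finset.card_eq_zero.1 hn
    exact ⟨{e}, by simpa using he, hN.subset (by simpa using he), by simp, by simp [mVerts]⟩
  | succ n ih =>
    obtain ⟨p, hpN, hpM⟩ : ∃ p ∈ mVerts N, p ∉ mVerts M :=
      Finset.exists_mem_notMem_of_card_lt_card (by rw [hM.card_mVerts, hN.card_mVerts]; lia)
    obtain ⟨z, hpz⟩ := mem_mVerts.1 hpN
    by_cases hzM : z ∈ mVerts M
    · obtain ⟨y, hzy⟩ := mem_mVerts.1 hzM
      obtain ⟨L, hLsub, hL, hcard, hcover⟩ := ih (hM.subset (M.erase_subset s(z, y)))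
        (hN.subset (N.erase_subset s(p, z)))
        (by rw [Finset.card_erase_of_mem hzy, Finset.card_erase_of_mem hpz]; lia)
        (by rw [Finset.card_erase_of_mem hzy]; lia)
      rw [← hcard]
      exact hM.exists_augmentation_of_erase hN hpM hpz hzy hL hLsub hcover
    · refine ⟨insert s(p, z) M, ?_, hM.insert (hN.adj hpz) hpM hzM, ?_, ?_⟩
      · exact Finset.insert_subset (Finset.mem_union_right M hpz) Finset.subset_union_left
      · rw [card_insert_of_notMem_mVerts hpM, hn]
      · exact mVerts_mono (Finset.subset_insert _ _)

end Matching

/-! ### Ranked matchings -/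

section Rank

variable {σ ι : Type*} [LinearOrder ι] {r : Sym2 σ → ι} {G : SimpleGraph σ} {M N : Finset (Sym2 σ)}

/-- The rank of a set of edges with respect to a ranking `r` of all edges: two sets are compared by
the `r`-largest edge that belongs to exactly one of them. -/
def edgesRank (r : Sym2 σ → ι) (M : Finset (Sym2 σ)) : Colex (Finset ι) :=
  toColex (M.image r)

/-- A ranking of the edges of `G` has the exchange property if an edge `f` can be lowered by joining
one of its endpoints to an endpoint of any lower edge. In a cochordal graph a perfect elimination
order of the complement provides such a ranking. -/
def HasEdgeExchange (G : SimpleGraph σ) (r : Sym2 σ → ι) : Prop :=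
  ∀ e ∈ G.edgeSet, ∀ f ∈ G.edgeSet, r e < r f → ∃ a ∈ e, ∃ b ∈ f, G.Adj a b ∧ r s(a, b) < r f

lemma edgesRank_lt_iff (hr : r.Injective) :
    edgesRank r N < edgesRank r M ↔ ∃ e ∈ M, e ∉ N ∧ ∀ f ∈ N, f ∉ M → r f < r e := by
  simp only [edgesRank, Finset.Colex.toColex_lt_toColex_iff_exists_forall_lt,
    Finset.exists_mem_image, Finset.forall_mem_image, hr.mem_finset_image]

lemma exists_subset_insert_of_erase_subset [DecidableEq σ] {A B : Finset σ} {c : σ}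
    (hcard : B.card = A.card) (hne : B ≠ A) (h : A.erase c ⊆ B) :
    ∃ a ∈ B, a ∉ A ∧ B ⊆ insert a A := by
  obtain ⟨a, haB, haA⟩ : ∃ a ∈ B, a ∉ A := by
    by_contra! hsub
    exact hne (Finset.eq_of_subset_of_card_le hsub hcard.ge)
  have hsub : insert a (A.erase c) ⊆ B := Finset.insert_subset haB h
  have hcard' : B.card ≤ (insert a (A.erase c)).card := by
    rw [Finset.card_insert_of_notMem fun h ↦ haA (Finset.mem_of_mem_erase h), hcard]
    exact Nat.sub_le_iff_le_add.1 Finset.pred_card_le_card_erase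
  rw [← Finset.eq_of_subset_of_card_le hsub hcard']
  exact ⟨a, Finset.mem_insert_self _ _, haA, Finset.insert_subset_insert a (A.erase_subset c)⟩

variable [Fintype σ] [DecidableEq σ]

lemma IsMatching.exists_augmentation_erase (hM : IsMatching G M) (hN : IsMatching G N)
    (hcard : M.card = N.card) {e : Sym2 σ} (heM : e ∈ M) (heN : e ∉ N)
    (hlt : ∀ f ∈ N, f ∉ M → r f < r e) :
    ∃ M', IsMatching G M' ∧ M'.card = M.card ∧ e ∉ M' ∧ (∀ f ∈ M', f ∉ M → r f < r e) ∧
      mVerts M' ⊆ mVerts M ∪ mVerts N ∧ mVerts (M.erase e) ⊆ mVerts M' := by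
  obtain ⟨M', hsub, hM', hcard', hV⟩ := (hM.subset (M.erase_subset e)).exists_augmentation hN
    (hcard ▸ Finset.card_erase_lt_of_mem heM)
  rw [Finset.card_erase_add_one heM] at hcard'
  refine ⟨M', hM', hcard', by grind, by grind, ?_, hV⟩
  rw [← mVerts_union]
  exact mVerts_mono (by grind)

lemma IsMatching.insert_edgesRank_lt (hr : r.Injective) (hN : IsMatching G N)
    (hcard : N.card + 1 = M.card) {e : Sym2 σ} (heM : e ∈ M) (heN : e ∉ N)
    (hlow : ∀ f ∈ N, f ∉ M → r f < r e) {a b : σ} (hab : G.Adj a b) (habe : r s(a, b) < r e)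
    (ha : a ∉ mVerts N) (hb : b ∉ mVerts N) :
    IsMatching G (insert s(a, b) N) ∧ (insert s(a, b) N).card = M.card ∧
      edgesRank r (insert s(a, b) N) < edgesRank r M := by
  refine ⟨hN.insert hab ha hb, by rw [card_insert_of_notMem_mVerts ha, hcard], ?_⟩
  refine (edgesRank_lt_iff hr).2 ⟨e, heM, ?_, ?_⟩ <;> grind

lemma IsMatching.exists_edgesRank_lt (hr : r.Injective) (hG : HasEdgeExchange G r)
    (hM : IsMatching G M) (hN : IsMatching G N) (hcard : M.card = N.card)
    (hlt : edgesRank r N < edgesRank r M) :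
    ∃ M', IsMatching G M' ∧ M'.card = M.card ∧ edgesRank r M' < edgesRank r M ∧
      mVerts M' ⊆ mVerts M ∪ mVerts N ∧ ∃ c, (mVerts M).erase c ⊆ mVerts M' := by
  obtain ⟨e, hxy, hxyN, hlt⟩ := (edgesRank_lt_iff hr).1 hlt
  induction e with | h x y
  obtain ⟨M', hM', hcard', hxyM', hlow, hVsub, hV⟩ :=
    hM.exists_augmentation_erase hN hcard hxy hxyN hlt
  have hVe := hM.mVerts_erase hxy
  by_cases hmeet : x ∈ mVerts M' ∨ y ∈ mVerts M'
  · refine ⟨M', hM', hcard', (edgesRank_lt_iff hr).2 ⟨_, hxy, hxyM', hlow⟩, hVsub, ?_⟩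
    exact hmeet.elim (fun _ ↦ ⟨y, by grind⟩) (fun _ ↦ ⟨x, by grind⟩)
  have hx : x ∉ mVerts M' := fun h ↦ hmeet (.inl h)
  obtain ⟨p, hpM', hpM⟩ : ∃ p ∈ mVerts M', p ∉ mVerts M := by
    by_contra! hsub
    exact hx (Finset.eq_of_subset_of_card_le hsub (by rw [hM.card_mVerts, hM'.card_mVerts, hcard'])
      ▸ left_mem_mVerts hxy)
  obtain ⟨z, hpz⟩ := mem_mVerts.1 hpM'
  obtain ⟨a, ha, b, hb, hab, hablt⟩ := hG _ (hM'.1 hpz) _ (hM.1 hxy)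
    (hlow _ hpz fun h ↦ hpM (left_mem_mVerts h))
  have hbM := mem_mVerts_of_mem hxy hb
  have hb : b = x ∨ b = y := Sym2.mem_iff.1 hb
  have hc : ∃ c, ∀ v ∈ (mVerts M).erase c, v = b ∨ v ∈ mVerts (M.erase s(x, y)) :=
    hb.elim (fun _ ↦ ⟨y, by grind⟩) (fun _ ↦ ⟨x, by grind⟩)
  rcases Sym2.mem_iff.1 ha with rfl | rfl
  · obtain ⟨hL, hLcard, hLlt⟩ := (hM.subset (M.erase_subset s(x, y))).insert_edgesRank_lt hr
      (Finset.card_erase_add_one hxy) hxy (Finset.notMem_erase _ _) (by grind) hab hablt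
      (by grind) (by grind)
    refine ⟨_, hL, hLcard, hLlt, ?_, hc.imp fun c hc ↦ ?_⟩ <;> rw [mVerts_insert] <;> grind
  · have hVe' := hM'.mVerts_erase hpz
    obtain ⟨hL, hLcard, hLlt⟩ := (hM'.subset (M'.erase_subset s(p, a))).insert_edgesRank_lt hr
      (by rw [Finset.card_erase_add_one hpz, hcard']) hxy (by grind) (by grind) hab hablt
      (by grind) (by grind)
    have haM' := right_mem_mVerts hpz
    refine ⟨_, hL, hLcard, hLlt, ?_, hc.imp fun c hc ↦ ?_⟩ <;> rw [mVerts_insert]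
    · have hsub : mVerts (M'.erase s(p, a)) ⊆ mVerts M' := mVerts_mono (M'.erase_subset _)
      exact Finset.insert_subset (hVsub haM') (Finset.insert_subset
        (Finset.mem_union_left _ hbM) (hsub.trans hVsub))
    · grind

theorem IsMatching.exchange (hr : r.Injective) (hG : HasEdgeExchange G r) (hM : IsMatching G M)
    (hN : IsMatching G N) (hcard : M.card = N.card) (hlt : edgesRank r N < edgesRank r M)
    (hmin : ∀ M', IsMatching G M' → mVerts M' = mVerts M → edgesRank r M ≤ edgesRank r M') :
    ∃ a ∈ mVerts N, a ∉ mVerts M ∧ ∃ M', IsMatching G M' ∧ M'.card = M.card ∧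
      edgesRank r M' < edgesRank r M ∧ mVerts M' ⊆ insert a (mVerts M) := by
  obtain ⟨M', hM', hcard', hlt', hsub, c, hc⟩ := hM.exists_edgesRank_lt hr hG hN hcard hlt
  obtain ⟨a, haM', haM, ha⟩ := exists_subset_insert_of_erase_subset
    (by rw [hM.card_mVerts, hM'.card_mVerts, hcard'])
    (fun h ↦ (hmin M' hM' h).not_gt hlt') hc
  exact ⟨a, (Finset.mem_union.1 (hsub haM')).resolve_left haM, haM, M', hM', hcard', hlt', ha⟩

end Rank

/-! ### Chordal graphs -/

section Chordal

variable {V : Type*} {H : SimpleGraph V}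

lemma zmod_eq_add_one_iff {m : ℕ} [Fact (1 < m)] (i j : ZMod m) :
    i = j + 1 ↔ i.val = j.val + 1 ∨ (i.val = 0 ∧ j.val + 1 = m) := by
  have : NeZero m := ⟨by have := Fact.out (p := 1 < m); lia⟩
  have hi := i.val_lt
  have hj := j.val_lt
  rw [← (ZMod.val_injective m).eq_iff, ZMod.val_add, ZMod.val_one]
  rcases eq_or_ne (j.val + 1) m with h | h
  · rw [h, Nat.mod_self]; lia
  · rw [Nat.mod_eq_of_lt (by lia)]; lia

lemma IsChordal.lt_four_of_inducedCycle (hH : IsChordal H) {m : ℕ} {q : ℕ → V}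
    (hq : ∀ a b, a < b → b < m →
      q a ≠ q b ∧ (H.Adj (q a) (q b) ↔ b = a + 1 ∨ (a = 0 ∧ b + 1 = m))) : m < 4 := by
  by_contra! hm
  have : Fact (1 < m) := ⟨by lia⟩
  have : NeZero m := ⟨by lia⟩
  refine hH m hm ⟨fun i ↦ q i.val, fun i j hij ↦ ?_, fun i j ↦ ?_⟩
  · apply ZMod.val_injective m
    rcases lt_trichotomy i.val j.val with h | h | h
    · exact absurd hij (hq _ _ h j.val_lt).1
    · exact h
    · exact absurd hij.symm (hq _ _ h i.val_lt).1
  · have hi := i.val_lt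
    have hj := j.val_lt
    simp only [zmod_eq_add_one_iff]
    rcases lt_trichotomy i.val j.val with h | h | h
    · rw [(hq _ _ h hj).2]; lia
    · simp only [h, SimpleGraph.irrefl, false_iff]; lia
    · rw [H.adj_comm, (hq _ _ h hi).2]; lia

lemma exists_inducedPath_of_reachable {x y : V} (h : H.Reachable x y) :
    ∃ (l : ℕ) (p : ℕ → V), p 0 = x ∧ p l = y ∧
      ∀ a b, a < b → b ≤ l → p a ≠ p b ∧ (H.Adj (p a) (p b) ↔ b = a + 1) := by
  obtain ⟨w, hw⟩ := h.exists_walk_length_eq_dist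
  have hdist (i : ℕ) (hi : i ≤ w.length) : H.dist x (w.getVert i) = i := by
    rw [← SimpleGraph.length_eq_dist_of_subwalk hw (w.isSubwalk_take i), w.take_length,
      min_eq_left hi]
  refine ⟨w.length, w.getVert, w.getVert_zero, w.getVert_length, fun a b hab hb ↦ ⟨?_, ?_, ?_⟩⟩
  · intro heq
    have := hdist a (by lia)
    rw [heq, hdist b hb] at this
    lia
  · intro hadj
    have := hadj.diff_dist_adj (u := x)
    rw [hdist a (by lia), hdist b hb] at this
    lia
  · rintro rfl
    exact w.adj_getVert_succ hb

/-- A vertex seeing only the ends of an induced path closes it up to an induced cycle. -/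
lemma IsChordal.adj_of_reachable_induce (hH : IsChordal H) {v x y : V} {U : Set V} (hxU : x ∈ U)
    (hyU : y ∈ U) (hxy : x ≠ y) (hvx : H.Adj v x) (hvy : H.Adj v y)
    (hU : ∀ u ∈ U, u ≠ v ∧ (H.Adj v u → u = x ∨ u = y))
    (hreach : (H.induce U).Reachable ⟨x, hxU⟩ ⟨y, hyU⟩) : H.Adj x y := by
  obtain ⟨l, p, hp0, hpl, hp⟩ := exists_inducedPath_of_reachable hreach
  have hl : l ≠ 0 := by
    rintro rfl
    exact hxy (congrArg Subtype.val (hp0.symm.trans hpl))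
  have hpx : (p 0 : V) = x := by rw [hp0]
  have hpy : (p l : V) = y := by rw [hpl]
  have hvp (i : ℕ) (hi : i ≤ l) : H.Adj v (p i) ↔ i = 0 ∨ i = l := by
    refine ⟨fun hadj ↦ ?_, ?_⟩
    · rcases (hU _ (p i).2).2 hadj with h | h
      · by_contra hne
        exact (hp 0 i (by lia) hi).1 (Subtype.ext (hpx.trans h.symm))
      · by_contra hne
        exact (hp i l (by lia) le_rfl).1 (Subtype.ext (h.trans hpy.symm))
    · rintro (rfl | rfl)
      · rwa [hpx]
      · rwa [hpy]
  have hcycle : l + 2 < 4 := by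
    refine hH.lt_four_of_inducedCycle (q := fun i ↦ if i ≤ l then p i else v) fun a b hab hb ↦ ?_
    have ha : a ≤ l := by lia
    by_cases hbl : b ≤ l
    · obtain ⟨hne, hadj⟩ := hp a b hab hbl
      simp only [if_pos ha, if_pos hbl]
      exact ⟨Subtype.coe_ne_coe.2 hne, by rw [← H.induce_adj, hadj]; lia⟩
    · simp only [if_pos ha, if_neg hbl]
      exact ⟨(hU _ (p a).2).1, by rw [H.adj_comm, hvp a ha]; lia⟩
  obtain rfl : l = 1 := by lia
  rw [← hpx, ← hpy]
  exact (hp 0 1 one_pos le_rfl).2.2 rfl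

lemma IsChordal.isClique_boundary (hH : IsChordal H) {C : Set V} (hC : (H.induce C).Connected)
    {v : V} (hv : ∀ c ∈ C, c ≠ v ∧ ¬H.Adj v c) :
    H.IsClique {t | H.Adj v t ∧ ∃ c ∈ C, H.Adj c t} := by
  rintro a ⟨hva, c, hcC, hca⟩ b ⟨hvb, d, hdC, hdb⟩ hab
  have hCa := SimpleGraph.connected_induce_union hC.preconnected (t := {a}) .of_subsingleton hcC
    rfl hca
  have hCab := SimpleGraph.connected_induce_union hCa.preconnected (t := {b}) .of_subsingleton
    (.inl hdC) rfl hdb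
  refine hH.adj_of_reachable_induce (.inl (.inr rfl)) (.inr rfl) hab hva hvb ?_
    (hCab.preconnected _ _)
  rintro u ((huC | rfl) | rfl)
  · exact ⟨(hv u huC).1, fun h ↦ absurd h (hv u huC).2⟩
  · exact ⟨hva.ne', fun _ ↦ .inl rfl⟩
  · exact ⟨hvb.ne', fun _ ↦ .inr rfl⟩

lemma exists_connected_closed_subset (H : SimpleGraph V) {D : Set V} {w : V} (hw : w ∈ D) :
    ∃ C ⊆ D, w ∈ C ∧ (H.induce C).Connected ∧ ∀ c ∈ C, ∀ d ∈ D, H.Adj c d → d ∈ C := by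
  let 𝒮 : Set (Set V) := {A | A ⊆ D ∧ w ∈ A ∧ (H.induce A).Connected}
  have hw𝒮 : {w} ∈ 𝒮 :=
    ⟨Set.singleton_subset_iff.2 hw, rfl, ⟨.of_subsingleton⟩⟩
  refine ⟨⋃₀ 𝒮, Set.sUnion_subset fun A hA ↦ hA.1, ⟨{w}, hw𝒮, rfl⟩,
    SimpleGraph.induce_sUnion_connected_of_pairwise_not_disjoint ⟨_, hw𝒮⟩
      (fun hA hB ↦ ⟨w, hA.2.1, hB.2.1⟩) fun hA ↦ hA.2.2, ?_⟩
  rintro c ⟨A, ⟨hAD, hwA, hA⟩, hcA⟩ d hd hcd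
  exact ⟨A ∪ {d}, ⟨Set.union_subset hAD (Set.singleton_subset_iff.2 hd), .inl hwA,
    SimpleGraph.connected_induce_union hA.preconnected .of_subsingleton hcA rfl hcd⟩, .inr rfl⟩

lemma exists_not_adj_of_not_isClique {S T : Set V} (hTS : T ⊆ S) (hT : H.IsClique T)
    (hS : ¬H.IsClique S) :
    ∃ v ∈ S, ∃ w ∈ S, w ≠ v ∧ ¬H.Adj v w ∧ ∀ t ∈ T, t ≠ v → H.Adj v t := by
  by_cases hTadj : ∀ t ∈ T, ∀ s ∈ S, s ≠ t → H.Adj t s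
  · simp only [SimpleGraph.IsClique, Set.Pairwise] at hS
    push Not at hS
    obtain ⟨v, hv, w, hw, hvw, hadj⟩ := hS
    exact ⟨v, hv, w, hw, hvw.symm, hadj, fun t ht htv ↦ (hTadj t ht v hv htv.symm).symm⟩
  · push Not at hTadj
    obtain ⟨v, hv, w, hw, hwv, hadj⟩ := hTadj
    exact ⟨v, hTS hv, w, hw, hwv, hadj, fun t ht htv ↦ hT hv ht htv.symm⟩

/-- Dirac's theorem. Keeping a proper clique `T` clear of the simplicial vertex is what lets the
induction recurse into one side of the separator `N(v) ∩ N(C)`. -/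
theorem IsChordal.exists_isClique_inter_neighborSet (hH : IsChordal H) {S T : Set V}
    (hS : S.Finite) (hTS : T ⊂ S) (hT : H.IsClique T) :
    ∃ c ∈ S \ T, H.IsClique (S ∩ H.neighborSet c) := by
  induction hcard : S.ncard using Nat.strong_induction_on generalizing S T with | _ N ih
  by_cases hSclique : H.IsClique S
  · obtain ⟨c, hc⟩ := Set.nonempty_of_ssubset hTS
    exact ⟨c, hc, hSclique.subset Set.inter_subset_left⟩
  obtain ⟨v, hvS, w, hwS, hwv, hvw, hTv⟩ := exists_not_adj_of_not_isClique hTS.subset hT hSclique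
  obtain ⟨C, hCD, hwC, hC, hclosed⟩ :=
    exists_connected_closed_subset H (D := {u ∈ S | u ≠ v ∧ ¬H.Adj v u}) ⟨hwS, hwv, hvw⟩
  let B : Set V := {t ∈ S | H.Adj v t ∧ ∃ c ∈ C, H.Adj c t}
  have hB : H.IsClique B :=
    (hH.isClique_boundary hC fun c hc ↦ (hCD hc).2).subset fun t ht ↦ ht.2
  have hCBS : C ∪ B ⊂ S := by
    refine ⟨Set.union_subset (fun c hc ↦ (hCD hc).1) fun t ht ↦ ht.1, fun h ↦ ?_⟩
    rcases h hvS with hv | hv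
    · exact (hCD hv).2.1 rfl
    · exact hv.2.1.ne rfl
  have hBCB : B ⊂ C ∪ B :=
    ⟨Set.subset_union_right, fun h ↦ hvw (h (.inl hwC)).2.1⟩
  obtain ⟨c, ⟨hcCB, hcB⟩, hclique⟩ := ih _ (hcard ▸ Set.ncard_lt_ncard hCBS hS)
    (hS.subset hCBS.subset) hBCB hB rfl
  have hcC : c ∈ C := hcCB.resolve_right hcB
  obtain ⟨hcS, hcv, hvc⟩ := hCD hcC
  refine ⟨c, ⟨hcS, fun hcT ↦ hvc (hTv c hcT hcv)⟩, hclique.subset ?_⟩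
  rintro a ⟨haS, hca⟩
  refine ⟨?_, hca⟩
  by_cases hva : H.Adj v a
  · exact .inr ⟨haS, hva, c, hcC, hca⟩
  · refine .inl (hclosed c hcC a ⟨haS, ?_, hva⟩ hca)
    rintro rfl
    exact hvc hca.symm

/-- A perfect elimination ordering of the subgraph induced on `S`, given by positions in `ℕ`:
the later neighbours of every vertex form a clique. -/
def IsPerfectEliminationOrder (H : SimpleGraph V) (S : Set V) (pos : V → ℕ) : Prop :=
  S.InjOn pos ∧ ∀ i ∈ S, H.IsClique {j ∈ S | H.Adj i j ∧ pos i < pos j}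

theorem IsChordal.exists_isPerfectEliminationOrder (hH : IsChordal H) {S : Set V}
    (hS : S.Finite) : ∃ pos : V → ℕ, IsPerfectEliminationOrder H S pos := by
  classical
  induction hcard : S.ncard generalizing S with
  | zero =>
    obtain rfl := (Set.ncard_eq_zero hS).1 hcard
    exact ⟨fun _ ↦ 0, by simp [IsPerfectEliminationOrder]⟩
  | succ N ih =>
    have hne : S.Nonempty := Set.nonempty_of_ncard_ne_zero (by lia)
    obtain ⟨c, ⟨hcS, -⟩, hclique⟩ := hH.exists_isClique_inter_neighborSet hS hne.empty_ssubset
      (by simp)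
    obtain ⟨pos, hinj, hpos⟩ := ih (S := S \ {c}) hS.sdiff (by
      rw [Set.ncard_sdiff_singleton_of_mem hcS]; lia)
    refine ⟨fun u ↦ if u = c then 0 else pos u + 1, fun a ha b hb hab ↦ ?_, fun i hi ↦ ?_⟩
    · grind [Set.InjOn]
    · by_cases hic : i = c
      · subst hic
        refine hclique.subset ?_
        rintro j ⟨hjS, hij, -⟩
        exact ⟨hjS, hij⟩
      · refine (hpos i ⟨hi, hic⟩).subset fun j ↦ ?_
        grind

/-- The rank of an edge for a vertex ordering: first the position of its earlier end, then that of
its later one. -/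
def edgeRank (pos : V → ℕ) (e : Sym2 V) : ℕ ×ₗ ℕ :=
  toLex ((e.map pos).inf, (e.map pos).sup)

lemma edgeRank_injective {pos : V → ℕ} (hpos : pos.Injective) : (edgeRank pos).Injective := by
  intro e f hef
  obtain ⟨hinf, hsup⟩ := Prod.mk.inj hef
  exact Sym2.map.injective hpos (Sym2.inf_eq_inf_and_sup_eq_sup.1 ⟨hinf, hsup⟩)

lemma edgeRank_mk_lt_iff {pos : V → ℕ} {a b x y : V} :
    edgeRank pos s(a, b) < edgeRank pos s(x, y) ↔ pos a ⊓ pos b < pos x ⊓ pos y ∨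
      (pos a ⊓ pos b = pos x ⊓ pos y ∧ pos a ⊔ pos b < pos x ⊔ pos y) :=
  Prod.Lex.toLex_lt_toLex

theorem IsPerfectEliminationOrder.hasEdgeExchange {G : SimpleGraph V} {pos : V → ℕ}
    (hpos : IsPerfectEliminationOrder Gᶜ Set.univ pos) : HasEdgeExchange G (edgeRank pos) := by
  obtain ⟨hinj, hclique⟩ := hpos
  have hinj : pos.Injective := Set.injOn_univ.1 hinj
  intro e he f hf hlt
  obtain ⟨m, b, hmb, rfl⟩ : ∃ m b, pos m ≤ pos b ∧ e = s(m, b) := by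
    induction e with | _ a b
    rcases le_total (pos a) (pos b) with h | h
    · exact ⟨a, b, h, rfl⟩
    · exact ⟨b, a, h, Sym2.eq_swap⟩
  by_cases hmf : m ∈ f
  · exact ⟨b, Sym2.mem_mk_right m b, m, hmf, G.adj_symm he, by rwa [Sym2.eq_swap]⟩
  induction f with | _ x y
  obtain ⟨hmx, hmy⟩ : m ≠ x ∧ m ≠ y := by simpa using hmf
  have hposx : pos m < pos x := by
    have := hinj.ne hmx
    rw [edgeRank_mk_lt_iff] at hlt
    lia
  have hposy : pos m < pos y := by
    have := hinj.ne hmy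
    rw [edgeRank_mk_lt_iff] at hlt
    lia
  have hadj : G.Adj m x ∨ G.Adj m y := by
    by_contra! hnot
    have hxy := hclique m trivial ⟨trivial, (G.compl_adj _ _).2 ⟨hmx, hnot.1⟩, hposx⟩
      ⟨trivial, (G.compl_adj _ _).2 ⟨hmy, hnot.2⟩, hposy⟩ (G.ne_of_adj hf)
    exact ((G.compl_adj _ _).1 hxy).2 hf
  rcases hadj with h | h
  · exact ⟨m, Sym2.mem_mk_left m b, x, Sym2.mem_mk_left x y, h, edgeRank_mk_lt_iff.2 (by lia)⟩
  · exact ⟨m, Sym2.mem_mk_left m b, y, Sym2.mem_mk_right x y, h, edgeRank_mk_lt_iff.2 (by lia)⟩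

end Chordal

/-! ### Squarefree monomial ideals and linear quotients -/

section SqfreeMonomial

variable {σ : Type*} (R : Type*) [CommRing R]

/-- The squarefree monomial `∏_{v ∈ B} x_v`. -/
noncomputable def sqfreeMonomial (B : Finset σ) : MvPolynomial σ R :=
  ∏ v ∈ B, X v

lemma sqfreeMonomial_eq_monomial (B : Finset σ) :
    sqfreeMonomial R B = monomial (Finsupp.indicator B fun _ _ ↦ 1) 1 := by
  simpa [sqfreeMonomial] using prod_X_pow (R := R) (fun _ ↦ 1) B

lemma indicator_one_le_iff {B : Finset σ} {d : σ →₀ ℕ} :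
    (Finsupp.indicator B fun _ _ ↦ 1) ≤ d ↔ B ⊆ d.support := by
  classical
  simp only [Finsupp.le_def, Finsupp.indicator_apply, Finset.subset_iff, Finsupp.mem_support_iff]
  exact forall_congr' fun v ↦ by split_ifs with hv <;> simp [hv]; lia

lemma support_indicator_one (B : Finset σ) :
    (Finsupp.indicator B fun _ _ ↦ 1 : σ →₀ ℕ).support = B := by
  classical
  ext v
  simp [Finsupp.indicator_apply]

lemma sqfreeMonomial_injective [Nontrivial R] :
    Function.Injective (sqfreeMonomial R : Finset σ → MvPolynomial σ R) := by
  intro B C h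
  rw [sqfreeMonomial_eq_monomial, sqfreeMonomial_eq_monomial] at h
  rw [← support_indicator_one B, monomial_left_injective one_ne_zero h, support_indicator_one]

lemma sqfreeMonomial_dvd_monomial {B : Finset σ} {d : σ →₀ ℕ} (h : B ⊆ d.support) :
    sqfreeMonomial R B ∣ monomial d 1 := by
  rw [sqfreeMonomial_eq_monomial, monomial_dvd_monomial]
  exact ⟨.inr (indicator_one_le_iff.2 h), one_dvd 1⟩

variable {R} {F : Set (Finset σ)} {f : MvPolynomial σ R}

lemma mem_span_sqfreeMonomial_image :
    f ∈ Ideal.span (sqfreeMonomial R '' F) ↔ ∀ d ∈ f.support, ∃ B ∈ F, B ⊆ d.support := by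
  have himage : sqfreeMonomial R '' F =
      (fun d ↦ monomial d (1 : R)) '' ((fun B ↦ Finsupp.indicator B fun _ _ ↦ 1) '' F) := by
    simp only [Set.image_image, ← sqfreeMonomial_eq_monomial]
  simp only [himage, mem_ideal_span_monomial_image, Set.exists_mem_image, indicator_one_le_iff]

lemma monomial_mem_span_sqfreeMonomial_image [Nontrivial R] {d : σ →₀ ℕ} :
    monomial d (1 : R) ∈ Ideal.span (sqfreeMonomial R '' F) ↔ ∃ B ∈ F, B ⊆ d.support := by
  classical
  rw [mem_span_sqfreeMonomial_image, support_monomial, if_neg one_ne_zero]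
  simp

variable [DecidableEq σ] {B : Finset σ}

lemma mem_colon_sqfreeMonomial :
    f ∈ Submodule.colon (Ideal.span (sqfreeMonomial R '' F))
        (Ideal.span {sqfreeMonomial R B} : Ideal (MvPolynomial σ R)) ↔
      ∀ d ∈ f.support, ∃ C ∈ F, C \ B ⊆ d.support := by
  rw [Ideal.mem_colon_span_singleton, mem_span_sqfreeMonomial_image, sqfreeMonomial_eq_monomial]
  refine ⟨fun h d hd ↦ ?_, fun h d hd ↦ ?_⟩
  · obtain ⟨C, hC, hsub⟩ := h (d + Finsupp.indicator B fun _ _ ↦ 1) (by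
      rw [mem_support_iff, coeff_mul_monomial, mul_one]
      exact mem_support_iff.1 hd)
    refine ⟨C, hC, fun v hv ↦ ?_⟩
    obtain ⟨hvC, hvB⟩ := Finset.mem_sdiff.1 hv
    simpa [hvB] using hsub hvC
  · rw [mem_support_iff, coeff_mul_monomial', mul_one, ite_ne_right_iff] at hd
    obtain ⟨hle, hd⟩ := hd
    obtain ⟨C, hC, hsub⟩ := h _ (mem_support_iff.2 hd)
    refine ⟨C, hC, fun v hvC ↦ ?_⟩
    by_cases hvB : v ∈ B
    · exact indicator_one_le_iff.1 hle hvB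
    · simpa [hvB] using hsub (Finset.mem_sdiff.2 ⟨hvC, hvB⟩)

lemma X_mem_colon_sqfreeMonomial [Nontrivial R] {c : σ} :
    X c ∈ Submodule.colon (Ideal.span (sqfreeMonomial R '' F))
        (Ideal.span {sqfreeMonomial R B} : Ideal (MvPolynomial σ R)) ↔
      ∃ C ∈ F, C ⊆ insert c B := by
  rw [mem_colon_sqfreeMonomial, support_X]
  simp [Finset.subset_iff, or_iff_not_imp_right, Finsupp.single_apply, eq_comm]

lemma colon_sqfreeMonomial_eq_span_X (h : ∀ C ∈ F, ∃ c ∈ C, c ∉ B ∧ ∃ D ∈ F, D ⊆ insert c B) :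
    Submodule.colon (Ideal.span (sqfreeMonomial R '' F))
        (Ideal.span {sqfreeMonomial R B} : Ideal (MvPolynomial σ R)) =
      Ideal.span (X '' {c | ∃ D ∈ F, D ⊆ insert c B}) := by
  ext f
  rw [mem_colon_sqfreeMonomial, mem_ideal_span_X_image]
  refine forall₂_congr fun d _ ↦ ⟨?_, ?_⟩
  · rintro ⟨C, hC, hsub⟩
    obtain ⟨c, hcC, hcB, hD⟩ := h C hC
    exact ⟨c, hD, Finsupp.mem_support_iff.1 (hsub (Finset.mem_sdiff.2 ⟨hcC, hcB⟩))⟩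
  · rintro ⟨c, ⟨D, hD, hsub⟩, hc⟩
    refine ⟨D, hD, (Finset.sdiff_subset_sdiff hsub le_rfl).trans fun v hv ↦ ?_⟩
    obtain rfl : v = c := by grind
    exact Finsupp.mem_support_iff.2 hc

end SqfreeMonomial

section LinearQuotients

variable {K : Type*} [Field K] {σ ι : Type*} [LinearOrder ι] {F : Set (Finset σ)}

lemma minGens_span_sqfreeMonomial (hF : IsAntichain (· ⊆ ·) F) :
    minGens K (Ideal.span (sqfreeMonomial K '' F)) = sqfreeMonomial K '' F := by
  ext u
  constructor
  · rintro ⟨⟨d, rfl⟩, hmem, hmin⟩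
    obtain ⟨B, hB, hBd⟩ := monomial_mem_span_sqfreeMonomial_image.1 hmem
    exact ⟨B, hB, hmin _ ⟨_, sqfreeMonomial_eq_monomial K B⟩
      (Ideal.subset_span (Set.mem_image_of_mem _ hB)) (sqfreeMonomial_dvd_monomial K hBd)⟩
  · rintro ⟨B, hB, rfl⟩
    refine ⟨⟨_, sqfreeMonomial_eq_monomial K B⟩,
      Ideal.subset_span (Set.mem_image_of_mem _ hB), ?_⟩
    rintro _ ⟨d, rfl⟩ hmem hdvd
    obtain ⟨C, hC, hCd⟩ := monomial_mem_span_sqfreeMonomial_image.1 hmem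
    rw [sqfreeMonomial_eq_monomial, monomial_one_dvd_monomial_one] at hdvd
    have hdB : d.support ⊆ B := by
      simpa only [support_indicator_one] using Finsupp.support_mono hdvd
    obtain rfl : C = B := hF.eq hC hB (hCd.trans hdB)
    rw [sqfreeMonomial_eq_monomial, le_antisymm hdvd (indicator_one_le_iff.2 hCd)]

lemma exists_list_pairwise_lt {α : Type*} {s : Finset α} {w : α → ι} (hw : (s : Set α).InjOn w) :
    ∃ l : List α, (∀ x, x ∈ l ↔ x ∈ s) ∧ l.Pairwise (w · < w ·) := by
  classical
  induction s using Finset.induction_on_max_value w with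
  | empty => exact ⟨[], by simp⟩
  | insert a s ha hmax ih =>
    obtain ⟨l, hmem, hl⟩ := ih (hw.mono (Finset.coe_subset.2 (Finset.subset_insert a s)))
    refine ⟨l ++ [a], by grind, List.pairwise_append.2 ⟨hl, by simp, fun x hx b hb ↦ ?_⟩⟩
    obtain rfl := List.mem_singleton.1 hb
    have hxs := (hmem x).1 hx
    refine (hmax x hxs).lt_of_ne fun heq ↦ ha ?_
    rwa [← hw (by simp [hxs]) (by simp) heq]

lemma mem_take_iff_of_pairwise_lt {α : Type*} {l : List α} {w : α → ι}
    (hl : l.Pairwise (w · < w ·)) {i : ℕ} (hi : i < l.length) {x : α} :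
    x ∈ l.take i ↔ x ∈ l ∧ w x < w l[i] := by
  have hmono := List.pairwise_iff_getElem.1 hl
  rw [List.mem_take_iff_getElem]
  constructor
  · rintro ⟨j, hj, rfl⟩
    exact ⟨List.getElem_mem _, hmono _ _ _ _ (by lia)⟩
  · rintro ⟨hx, hlt⟩
    obtain ⟨j, hj, rfl⟩ := List.getElem_of_mem hx
    refine ⟨j, lt_min ?_ hj, rfl⟩
    by_contra! hij
    rcases hij.eq_or_lt with rfl | hij
    · exact hlt.false
    · exact hlt.not_gt (hmono _ _ hi hj hij)

theorem hasLinearQuotients_span_sqfreeMonomial [DecidableEq σ] {w : Finset σ → ι}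
    (hfin : F.Finite) (hF : IsAntichain (· ⊆ ·) F) (hw : F.InjOn w)
    (hexch : ∀ B ∈ F, ∀ C ∈ F, w C < w B →
      ∃ c ∈ C, c ∉ B ∧ ∃ D ∈ F, w D < w B ∧ D ⊆ insert c B) :
    HasLinearQuotients K (Ideal.span (sqfreeMonomial K '' F)) := by
  obtain ⟨l, hmem, hl⟩ := exists_list_pairwise_lt (s := hfin.toFinset) (w := w) (by simpa using hw)
  simp only [Set.Finite.mem_toFinset] at hmem
  refine ⟨l.map (sqfreeMonomial K), ?_, fun u ↦ ?_, fun i _ ↦ ?_⟩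
  · exact .map (sqfreeMonomial_injective K) (hl.imp fun h ↦ ne_of_apply_ne w h.ne)
  · simp [minGens_span_sqfreeMonomial hF, hmem]
  · have hi : (i : ℕ) < l.length := by simpa using i.2
    have htake : {u | u ∈ (l.map (sqfreeMonomial K)).take i} =
        sqfreeMonomial K '' {C ∈ F | w C < w l[(i : ℕ)]} := by
      ext u
      simp [← List.map_take, mem_take_iff_of_pairwise_lt hl hi, hmem]
    rw [htake, List.get_eq_getElem, List.getElem_map]
    refine ⟨_, colon_sqfreeMonomial_eq_span_X ?_⟩
    rintro C ⟨hCF, hlt⟩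
    obtain ⟨c, hcC, hcB, D, hD, hDlt, hsub⟩ :=
      hexch _ ((hmem _).1 (List.getElem_mem hi)) C hCF hlt
    exact ⟨c, hcC, hcB, D, ⟨hD, hDlt⟩, hsub⟩

end LinearQuotients

/-! ### Squarefree powers of cochordal graphs -/

section MatchPow

variable {σ ι : Type*} [Fintype σ] [DecidableEq σ] [LinearOrder ι] {G : SimpleGraph σ} {k : ℕ}

/-- The vertex sets of the `k`-matchings of `G`, which index the minimal generators of
`I(G)^{[k]}`. -/
def matchingVertexSets (G : SimpleGraph σ) (k : ℕ) : Set (Finset σ) :=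
  {B | ∃ M, IsKMatching G M k ∧ mVerts M = B}

lemma sized_matchingVertexSets (G : SimpleGraph σ) (k : ℕ) :
    (matchingVertexSets G k).Sized (2 * k) := by
  rintro _ ⟨M, ⟨hM, rfl⟩, rfl⟩
  exact hM.card_mVerts

lemma isAntichain_matchingVertexSets (G : SimpleGraph σ) (k : ℕ) :
    IsAntichain (· ⊆ ·) (matchingVertexSets G k) :=
  (sized_matchingVertexSets G k).isAntichain

lemma matchPow_eq_span (K : Type*) [Field K] (G : SimpleGraph σ) (k : ℕ) :
    matchPow K G k = Ideal.span (sqfreeMonomial K '' matchingVertexSets G k) := by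
  refine congrArg Ideal.span (Set.ext fun u ↦ ⟨?_, ?_⟩)
  · rintro ⟨M, hM, rfl⟩
    exact ⟨_, ⟨M, hM, rfl⟩, rfl⟩
  · rintro ⟨_, ⟨M, hM, rfl⟩, rfl⟩
    exact ⟨M, hM, rfl⟩

lemma minGens_matchPow (K : Type*) [Field K] (G : SimpleGraph σ) (k : ℕ) :
    minGens K (matchPow K G k) = sqfreeMonomial K '' matchingVertexSets G k := by
  rw [matchPow_eq_span, minGens_span_sqfreeMonomial (isAntichain_matchingVertexSets G k)]

lemma exists_minimal_edgesRank (r : Sym2 σ → ι) {B : Finset σ} (hB : B ∈ matchingVertexSets G k) :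
    ∃ M, IsKMatching G M k ∧ mVerts M = B ∧
      ∀ M', IsMatching G M' → mVerts M' = B → edgesRank r M ≤ edgesRank r M' := by
  obtain ⟨M₀, ⟨hM₀, hcard₀⟩, hB⟩ := hB
  obtain ⟨M, ⟨hM, hMB⟩, hmin⟩ := Set.exists_min_image {M | IsMatching G M ∧ mVerts M = B}
    (edgesRank r) (Set.toFinite _) ⟨M₀, hM₀, hB⟩
  refine ⟨M, ⟨hM, ?_⟩, hMB, fun M' hM' hM'B ↦ hmin M' ⟨hM', hM'B⟩⟩
  have hcard := hM.card_mVerts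
  rw [hMB, ← hB, hM₀.card_mVerts] at hcard
  lia

/-- The generators are ordered by the rank of the lowest matching on their vertex set. -/
theorem HasEdgeExchange.hasLinearQuotients_matchPow (K : Type*) [Field K] {r : Sym2 σ → ι}
    (hr : r.Injective) (hG : HasEdgeExchange G r) (k : ℕ) :
    HasLinearQuotients K (matchPow K G k) := by
  choose! low hlow hverts hmin using
    fun B (hB : B ∈ matchingVertexSets G k) ↦ exists_minimal_edgesRank r hB
  rw [matchPow_eq_span]
  refine hasLinearQuotients_span_sqfreeMonomial (w := fun B ↦ edgesRank r (low B))
    (Set.toFinite _) (isAntichain_matchingVertexSets G k) ?_ fun B hB C hC hlt ↦ ?_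
  · intro B hB C hC h
    rw [← hverts B hB, Finset.image_injective hr (toColex_inj.1 h), hverts C hC]
  · obtain ⟨a, haC, haB, M', hM', hcard, hrank, hsub⟩ := (hlow B hB).1.exchange hr hG (hlow C hC).1
      ((hlow B hB).2.trans (hlow C hC).2.symm) hlt fun M' hM' hM'B ↦
        hmin B hB M' hM' (hM'B.trans (hverts B hB))
    rw [hverts B hB] at haB hsub
    rw [hverts C hC] at haC
    have hD : mVerts M' ∈ matchingVertexSets G k := ⟨M', ⟨hM', hcard.trans (hlow B hB).2⟩, rfl⟩
    exact ⟨a, haC, haB, mVerts M', hD, (hmin _ hD M' hM' rfl).trans_lt hrank, hsub⟩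

theorem hasLinearQuotients_matchPow_of_isChordal_compl (K : Type*) [Field K]
    (hG : IsChordal Gᶜ) (k : ℕ) : HasLinearQuotients K (matchPow K G k) := by
  obtain ⟨pos, hpos⟩ := hG.exists_isPerfectEliminationOrder Set.finite_univ
  exact hpos.hasEdgeExchange.hasLinearQuotients_matchPow K
    (edgeRank_injective (Set.injOn_univ.1 hpos.1)) k

end MatchPow

/-! ### Depth -/

section Depth

open CategoryTheory RingTheory.Sequence
open scoped Pointwise

universe u

variable {R : Type u} [CommRing R] {m I : Ideal R}

/-- `Ext^i(R/m, M) = 0` for all `i < d`. By Rees' theorem this says that `M` has an `M`-regular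
sequence of length `d` in `m`; unlike the latter condition it behaves well in exact sequences. -/
def ExtVanishesBelow (m : Ideal R) (M : Type u) [AddCommGroup M] [Module R M] (d : ℕ) : Prop :=
  ∀ i < d, Subsingleton (Abelian.Ext (ModuleCat.of R (R ⧸ m)) (ModuleCat.of R M) i)

lemma ExtVanishesBelow.of_exact {M₁ M₂ M₃ : Type u} [AddCommGroup M₁] [Module R M₁]
    [AddCommGroup M₂] [Module R M₂] [AddCommGroup M₃] [Module R M₃] {f : M₁ →ₗ[R] M₂}
    {g : M₂ →ₗ[R] M₃} (hf : Function.Injective f) (hg : Function.Surjective g)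
    (hfg : Function.Exact f g) {d : ℕ} (h₁ : ExtVanishesBelow m M₁ (d + 1))
    (h₂ : ExtVanishesBelow m M₂ d) : ExtVanishesBelow m M₃ d := by
  intro i hi
  let S : ShortComplex (ModuleCat.{u} R) :=
    ModuleCat.shortComplexOfCompEqZero f g hfg.linearMap_comp_eq_zero
  have hS : S.ShortExact :=
    { exact := (ShortComplex.ShortExact.moduleCat_exact_iff_function_exact S).2 hfg
      mono_f := (ModuleCat.mono_iff_injective _).2 hf
      epi_g := (ModuleCat.epi_iff_surjective _).2 hg }
  have hzero₂ := AddCommGrpCat.isZero_of_iff_subsingleton.2 (h₂ i hi)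
  have hzero₁ := AddCommGrpCat.isZero_of_iff_subsingleton.2 (h₁ (i + 1) (by lia))
  exact AddCommGrpCat.subsingleton_of_isZero <| ShortComplex.Exact.isZero_of_both_zeros
    (Abelian.Ext.covariant_sequence_exact₃' (ModuleCat.of R (R ⧸ m)) hS i (i + 1) rfl)
    (hzero₂.eq_zero_of_src _) (hzero₁.eq_zero_of_tgt _)

/-- From the exact sequence `0 → R/(I : x) → R/I → R/(I + (x)) → 0`. -/
lemma ExtVanishesBelow.quotient_sup_span_singleton {x : R} {d : ℕ}
    (hcolon : ExtVanishesBelow m (R ⧸ Submodule.colon I (Ideal.span {x} : Ideal R)) (d + 1))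
    (hI : ExtVanishesBelow m (R ⧸ I) d) : ExtVanishesBelow m (R ⧸ I ⊔ Ideal.span {x}) d := by
  have hker : Submodule.colon I (Ideal.span {x} : Ideal R) =
      (I.mkQ ∘ₗ LinearMap.toSpanSingleton R R x).ker := by
    ext y
    rw [Ideal.mem_colon_span_singleton, LinearMap.mem_ker]
    exact (Submodule.Quotient.mk_eq_zero I).symm
  refine .of_exact (f := Submodule.liftQ _ _ hker.le)
    (g := Submodule.factor (le_sup_left : I ≤ I ⊔ Ideal.span {x}))
    (LinearMap.ker_eq_bot.1 (Submodule.ker_liftQ_eq_bot' _ _ hker))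
    (Submodule.factor_surjective _) (LinearMap.exact_iff.2 ?_) hcolon hI
  rw [Submodule.range_liftQ, LinearMap.range_comp, LinearMap.range_toSpanSingleton,
    Submodule.factor, Submodule.ker_mapQ, Submodule.comap_id, Submodule.map_sup,
    Submodule.mkQ_map_self, bot_sup_eq]

lemma smul_top_quotient_lt_top (hm : m ≠ ⊤) (hI : I ≤ m) : m • (⊤ : Submodule R (R ⧸ I)) < ⊤ := by
  refine lt_top_iff_ne_top.2 fun h ↦ hm ?_
  have hcomap := congrArg (Submodule.comap I.mkQ) h
  rwa [Submodule.comap_smul_top_of_surjective _ _ I.mkQ_surjective, Submodule.ker_mkQ,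
    Submodule.comap_top, smul_eq_mul, Ideal.mul_top, sup_eq_left.2 hI] at hcomap

lemma support_quotient_eq_zeroLocus (m : Ideal R) :
    Module.support R (R ⧸ m) = PrimeSpectrum.zeroLocus m := by
  rw [Module.support_eq_zeroLocus, Ideal.annihilator_quotient]

lemma extVanishesBelow_length_of_isRegular [IsNoetherianRing R] (hm : m ≠ ⊤) (hI : I ≤ m)
    {rs : List R} (hmem : ∀ r ∈ rs, r ∈ m) (hreg : IsRegular (R ⧸ I) rs) :
    ExtVanishesBelow m (R ⧸ I) rs.length :=
  ModuleCat.subsingleton_ext_of_exists_isRegular m (ModuleCat.of R (R ⧸ m))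
    (support_quotient_eq_zeroLocus m).subset (ModuleCat.of R (R ⧸ I))
    (smul_top_quotient_lt_top hm hI) rs hmem hreg

lemma ExtVanishesBelow.exists_isRegular [IsNoetherianRing R] (hm : m ≠ ⊤) (hI : I ≤ m) {d : ℕ}
    (h : ExtVanishesBelow m (R ⧸ I) d) :
    ∃ rs : List R, rs.length = d ∧ (∀ r ∈ rs, r ∈ m) ∧ IsRegular (R ⧸ I) rs :=
  ModuleCat.exists_isRegular_of_exists_subsingleton_ext m d (ModuleCat.of R (R ⧸ I))
    (smul_top_quotient_lt_top hm hI) (ModuleCat.of R (R ⧸ m)) (support_quotient_eq_zeroLocus m) h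

/-- Reducing the cyclic module `R/I` modulo `x` gives `R/(I + (x))`. -/
noncomputable def quotSMulTopQuotientEquiv (I : Ideal R) (x : R) :
    QuotSMulTop x (R ⧸ I) ≃ₗ[R] R ⧸ I ⊔ Ideal.span {x} :=
  Submodule.quotEquivOfEq _ _ (by
    rw [← Submodule.ideal_span_singleton_smul, ← I.range_mkQ, LinearMap.range_eq_map,
      ← Submodule.map_smul'', smul_eq_mul, Ideal.mul_top]) ≪≫ₗ
    Submodule.quotientQuotientEquivQuotientSup I (Ideal.span {x})

lemma length_le_supportDim_of_isRegular {M : Type*} [AddCommGroup M] [Module R M]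
    [Module.Finite R M] {rs : List R} (hreg : IsRegular M rs) :
    rs.length ≤ Module.supportDim R M := by
  induction rs generalizing M with
  | nil =>
    have := hreg.nontrivial
    have := ((Module.nonempty_support_iff (R := R)).2 this).to_subtype
    exact Order.krullDim_nonneg
  | cons r rs ih =>
    obtain ⟨hr, hrs⟩ := (isRegular_cons_iff M r rs).1 hreg
    calc ((r :: rs).length : WithBot ℕ∞) = rs.length + 1 := by simp
      _ ≤ Module.supportDim R (QuotSMulTop r M) + 1 := by gcongr; exact ih hrs
      _ ≤ Module.supportDim R M :=
        Module.supportDim_quotSMulTop_succ_le_of_notMem_minimalPrimes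
          fun _ ↦ hr.notMem_of_mem_minimalPrimes

section MvPolynomial

variable {K : Type*} {σ : Type*}

lemma span_X_image_ne_top [CommSemiring K] [Nontrivial K] (A : Set σ) :
    (Ideal.span (X '' A) : Ideal (MvPolynomial σ K)) ≠ ⊤ := by
  rw [Ne, Ideal.eq_top_iff_one, mem_ideal_span_X_image]
  intro h
  obtain ⟨i, -, hi⟩ := h 0 (by simp)
  exact hi rfl

lemma idealOfVars_ne_top [CommSemiring K] [Nontrivial K] : idealOfVars σ K ≠ ⊤ := by
  rw [idealOfVars, ← Set.image_univ]
  exact span_X_image_ne_top _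

lemma isSMulRegular_X_quotient_span_X_image [CommRing K] {A : Set σ} {i : σ} (hi : i ∉ A) :
    IsSMulRegular (MvPolynomial σ K ⧸ Ideal.span (X '' A : Set (MvPolynomial σ K)))
      (X i : MvPolynomial σ K) := by
  rw [isSMulRegular_iff_right_eq_zero_of_smul]
  intro f hf
  obtain ⟨f, rfl⟩ := Submodule.Quotient.mk_surjective _ f
  rw [← Submodule.Quotient.mk_smul, Submodule.Quotient.mk_eq_zero, smul_eq_mul,
    mem_ideal_span_X_image] at hf
  rw [Submodule.Quotient.mk_eq_zero, mem_ideal_span_X_image]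
  intro e he
  obtain ⟨j, hjA, hj⟩ := hf (Finsupp.single i 1 + e) (by
    rwa [mem_support_iff, coeff_X_mul, ← mem_support_iff])
  have hij : i ≠ j := fun h ↦ hi (h ▸ hjA)
  exact ⟨j, hjA, by simpa [hij] using hj⟩

lemma isRegular_map_X_quotient_span_X_image [CommRing K] [Nontrivial K] {l : List σ} {A : Set σ}
    (hl : l.Nodup) (hlA : ∀ i ∈ l, i ∉ A) :
    IsRegular (MvPolynomial σ K ⧸ Ideal.span (X '' A : Set (MvPolynomial σ K)))
      (l.map (X : σ → MvPolynomial σ K)) := by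
  induction l generalizing A with
  | nil =>
    have := Ideal.Quotient.nontrivial_iff.2 (span_X_image_ne_top (K := K) A)
    exact .nil _ _
  | cons i l ih =>
    obtain ⟨hil, hl⟩ := List.nodup_cons.1 hl
    obtain ⟨hiA, hlA⟩ := List.forall_mem_cons.1 hlA
    have hrec := ih (A := insert i A) hl fun j hj ↦
      Set.mem_insert_iff.not.2 (not_or.2 ⟨ne_of_mem_of_not_mem hj hil, hlA j hj⟩)
    rw [Set.image_insert_eq, Ideal.span_insert, sup_comm] at hrec
    exact (isRegular_cons_iff _ _ _).2 ⟨isSMulRegular_X_quotient_span_X_image hiA,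
      ((quotSMulTopQuotientEquiv _ _).isRegular_congr _).2 hrec⟩

variable [Finite σ]

lemma extVanishesBelow_quotient_span_X_image [CommRing K] [Nontrivial K] [IsNoetherianRing K]
    {A : Set σ} {d : ℕ} (hd : A.ncard + d ≤ Nat.card σ) :
    ExtVanishesBelow (idealOfVars σ K)
      (MvPolynomial σ K ⧸ Ideal.span (X '' A : Set (MvPolynomial σ K))) d := by
  have := Fintype.ofFinite σ
  classical
  have hreg := isRegular_map_X_quotient_span_X_image (K := K) (A := A)
    Aᶜ.toFinset.nodup_toList fun i hi ↦ by simpa using hi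
  have hmem : ∀ f ∈ Aᶜ.toFinset.toList.map (X : σ → MvPolynomial σ K), f ∈ idealOfVars σ K :=
    List.forall_mem_map.2 fun i _ ↦ Ideal.subset_span ⟨i, rfl⟩
  have hext := extVanishesBelow_length_of_isRegular idealOfVars_ne_top
    (Ideal.span_mono (Set.image_subset_range _ _)) hmem hreg
  rw [List.length_map, Finset.length_toList, ← Set.ncard_eq_toFinset_card', Set.ncard_compl] at hext
  exact fun i hi ↦ hext i (by lia)

lemma extVanishesBelow_quotient_span_of_colon_eq [CommRing K] [Nontrivial K] [IsNoetherianRing K]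
    {L : List (MvPolynomial σ K)} {d : ℕ} (hd : d ≤ Nat.card σ)
    (hcolon : ∀ (i : ℕ) (hi : i < L.length), ∃ A : Set σ, A.ncard + (d + 1) ≤ Nat.card σ ∧
      Submodule.colon (Ideal.span {u | u ∈ L.take i}) (Ideal.span {L[i]}) = Ideal.span (X '' A)) :
    ExtVanishesBelow (idealOfVars σ K) (MvPolynomial σ K ⧸ Ideal.span {u | u ∈ L}) d := by
  suffices ∀ i ≤ L.length, ExtVanishesBelow (idealOfVars σ K)
      (MvPolynomial σ K ⧸ Ideal.span {u | u ∈ L.take i}) d by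
    have hL := this L.length le_rfl
    rwa [List.take_length] at hL
  intro i hi
  induction i with
  | zero =>
    have hempty : {u | u ∈ L.take 0} = X '' (∅ : Set σ) := by simp
    rw [hempty]
    exact extVanishesBelow_quotient_span_X_image (by simpa using hd)
  | succ i ih =>
    obtain ⟨A, hA, hcolonA⟩ := hcolon i hi
    have hspan : Ideal.span {u | u ∈ L.take (i + 1)} =
        Ideal.span {u | u ∈ L.take i} ⊔ Ideal.span {L[i]} := by
      rw [← Ideal.span_union]
      congr 1
      ext u
      simp only [List.take_succ_eq_append_getElem hi, List.mem_append, List.mem_singleton,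
        Set.mem_ofPred_eq, Set.mem_union, Set.mem_singleton_iff]
    rw [hspan]
    exact .quotient_sup_span_singleton
      (hcolonA ▸ extVanishesBelow_quotient_span_X_image hA) (ih (by lia))

variable [Field K]

lemma length_le_card_of_isRegular {I : Ideal (MvPolynomial σ K)} {rs : List (MvPolynomial σ K)}
    (hreg : IsRegular (MvPolynomial σ K ⧸ I) rs) : rs.length ≤ Nat.card σ := by
  have hdim : (rs.length : WithBot ℕ∞) ≤ Nat.card σ :=
    calc (rs.length : WithBot ℕ∞) ≤ Module.supportDim (MvPolynomial σ K) (MvPolynomial σ K ⧸ I) :=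
          length_le_supportDim_of_isRegular hreg
      _ ≤ ringKrullDim (MvPolynomial σ K) := Module.supportDim_le_ringKrullDim _ _
      _ = Nat.card σ := by simp [MvPolynomial.ringKrullDim_of_isNoetherianRing]
  exact_mod_cast hdim

lemma ExtVanishesBelow.le_qdepth {I : Ideal (MvPolynomial σ K)} {d : ℕ} (hI : I ≤ idealOfVars σ K)
    (h : ExtVanishesBelow (idealOfVars σ K) (MvPolynomial σ K ⧸ I) d) : d ≤ qdepth K I := by
  refine le_csSup ⟨Nat.card σ, ?_⟩ (h.exists_isRegular idealOfVars_ne_top hI)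
  rintro _ ⟨rs, rfl, -, hreg⟩
  exact length_le_card_of_isRegular hreg

end MvPolynomial

end Depth

/-! ### Undominated vertices and depth -/

section Domination

variable {K : Type*} [Field K] {σ : Type*} {G : SimpleGraph σ} {k : ℕ}

lemma exists_isKMatching_of_le_matchNum [Finite σ] (hk : k ≤ matchNum G) :
    ∃ M, IsKMatching G M k := by
  have hmax : matchNum G ∈ {l | ∃ M, IsKMatching G M l} := by
    have := Fintype.ofFinite (Sym2 σ)
    refine Nat.sSup_mem ⟨0, ∅, ⟨by simp, by simp⟩, rfl⟩ ⟨Fintype.card (Sym2 σ), ?_⟩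
    rintro _ ⟨M, -, rfl⟩
    exact M.card_le_univ
  obtain ⟨M, hM, hcard⟩ := hmax
  obtain ⟨N, hNM, hN⟩ := Finset.exists_subset_card_eq (hk.trans hcard.ge)
  exact ⟨N, hM.subset hNM, hN⟩

lemma HasLinearQuotientsOrder.exists_colon_eq_span_X {I : Ideal (MvPolynomial σ K)}
    {L : List (MvPolynomial σ K)} (hL : HasLinearQuotientsOrder K I L) {i : ℕ}
    (hi : i < L.length) :
    ∃ A : Set σ, Submodule.colon (Ideal.span {u | u ∈ L.take i}) (Ideal.span {L[i]}) =
      Ideal.span (X '' A) := by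
  obtain rfl | hpos := i.eq_zero_or_pos
  · obtain ⟨⟨d, hd⟩, -⟩ := (hL.2.1 L[0]).1 (List.getElem_mem hi)
    refine ⟨∅, Ideal.ext fun f ↦ ?_⟩
    simp [hd]
  · exact hL.2.2 ⟨i, hi⟩ hpos

lemma getElem_notMem_take {α : Type*} {L : List α} (hL : L.Nodup) {i : ℕ} (hi : i < L.length) :
    L[i] ∉ L.take i := by
  intro h
  obtain ⟨j, hj, hji⟩ := List.mem_take_iff_getElem.1 h
  have := hL.getElem_inj_iff.1 hji
  lia

variable [Fintype σ] [DecidableEq σ]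

lemma matchPow_le_idealOfVars (hk : k ≠ 0) : matchPow K G k ≤ idealOfVars σ K := by
  rw [matchPow_eq_span, Ideal.span_le]
  rintro _ ⟨B, hB, rfl⟩
  have hcard := sized_matchingVertexSets G k hB
  obtain ⟨v, hv⟩ := Finset.card_pos.1 (by lia : 0 < B.card)
  exact Ideal.mem_of_dvd _ (Finset.dvd_prod_of_mem X hv) (Ideal.subset_span ⟨v, rfl⟩)

lemma exists_adj_of_subset_insert {B C : Finset σ} {c : σ} (hB : B ∈ matchingVertexSets G k)
    (hC : C ∈ matchingVertexSets G k) (hCB : C ≠ B) (hsub : C ⊆ insert c B) :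
    c ∉ B ∧ ∃ w ∈ B, G.Adj c w := by
  have hnot : ¬ C ⊆ B := isAntichain_matchingVertexSets G k hC hB hCB
  have hcB : c ∉ B := fun h ↦ hnot (Finset.insert_eq_of_mem h ▸ hsub)
  have hcC : c ∈ C := by
    by_contra h
    exact hnot ((Finset.subset_insert_iff_of_notMem h).1 hsub)
  obtain ⟨N, ⟨hN, -⟩, rfl⟩ := hC
  obtain ⟨w, hcw⟩ := mem_mVerts.1 hcC
  have hadj := hN.adj hcw
  exact ⟨hcB, w, Finset.mem_of_mem_insert_of_ne (hsub (right_mem_mVerts hcw)) hadj.ne', hadj⟩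

/-- Each variable of the colon ideal lies outside `B` and is dominated by `B`, so it differs from
the undominated vertex `v`. -/
lemma ncard_add_le_of_colon_eq_span_X {F : Set (Finset σ)} {A : Set σ} {B : Finset σ} {v : σ}
    (hF : F ⊆ matchingVertexSets G k) (hB : B ∈ matchingVertexSets G k) (hBF : B ∉ F)
    (hv : v ∉ B) (hadj : ∀ w ∈ B, ¬ G.Adj v w)
    (hcolon : Submodule.colon (Ideal.span (sqfreeMonomial K '' F))
      (Ideal.span {sqfreeMonomial K B}) = Ideal.span (X '' A)) :
    A.ncard + (2 * k + 1) ≤ Nat.card σ := by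
  have hsub : A ⊆ ((insert v B)ᶜ : Finset σ) := by
    intro c hc
    have hXc : (X c : MvPolynomial σ K) ∈ Ideal.span (X '' A) := Ideal.subset_span ⟨c, hc, rfl⟩
    rw [← hcolon, X_mem_colon_sqfreeMonomial] at hXc
    obtain ⟨C, hC, hCB⟩ := hXc
    obtain ⟨hcB, w, hw, hcw⟩ :=
      exists_adj_of_subset_insert hB (hF hC) (ne_of_mem_of_not_mem hC hBF) hCB
    have hcv : c ≠ v := fun h ↦ hadj w hw (h ▸ hcw)
    simp [hcv, hcB]
  have hcard := Set.ncard_le_ncard hsub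
  have hle := (insert v B).card_le_univ
  rw [Set.ncard_coe_finset, Finset.card_compl] at hcard
  rw [Finset.card_insert_of_notMem hv, sized_matchingVertexSets G k hB] at hcard hle
  rw [Nat.card_eq_fintype_card]
  lia

theorem two_mul_le_qdepth_matchPow (hk : k ≠ 0) (hne : (matchingVertexSets G k).Nonempty)
    (hlq : HasLinearQuotients K (matchPow K G k))
    (hdom : ∀ B ∈ matchingVertexSets G k, ∃ v ∉ B, ∀ w ∈ B, ¬ G.Adj v w) :
    2 * k ≤ qdepth K (matchPow K G k) := by
  obtain ⟨L, hL⟩ := hlq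
  have hmem : {u | u ∈ L} = sqfreeMonomial K '' matchingVertexSets G k := by
    rw [← minGens_matchPow]
    exact Set.ext hL.2.1
  have hcard : 2 * k ≤ Nat.card σ := by
    obtain ⟨B, hB⟩ := hne
    rw [← sized_matchingVertexSets G k hB, Nat.card_eq_fintype_card]
    exact B.card_le_univ
  refine ExtVanishesBelow.le_qdepth (matchPow_le_idealOfVars hk) ?_
  rw [matchPow_eq_span, ← hmem]
  refine extVanishesBelow_quotient_span_of_colon_eq hcard fun i hi ↦ ?_
  obtain ⟨A, hA⟩ := hL.exists_colon_eq_span_X hi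
  refine ⟨A, ?_, hA⟩
  obtain ⟨B, hB, hBi⟩ := hmem.subset (List.getElem_mem hi)
  obtain ⟨F, hF, hFi⟩ := Set.subset_image_iff.1
    ((fun u hu ↦ hmem.subset (List.mem_of_mem_take hu)) : {u | u ∈ L.take i} ⊆ _)
  obtain ⟨v, hv, hadj⟩ := hdom B hB
  have hBF : B ∉ F := fun h ↦ getElem_notMem_take hL.1 hi
    (hBi ▸ hFi.subset (Set.mem_image_of_mem _ h))
  rw [← hFi, ← hBi] at hA
  exact ncard_add_le_of_colon_eq_span_X hF hB hBF hv hadj hA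

end Domination

theorem dominating_matching_of_min_depth_general {K : Type*} [Field K] {σ : Type*} [Fintype σ]
    [DecidableEq σ] (G : SimpleGraph σ) (k : ℕ) (hk1 : 1 ≤ k) (hk : k ≤ matchNum G)
    (hlq : HasLinearQuotients K (matchPow K G k) ∨ IsChordal Gᶜ)
    (hdepth : qdepth K (matchPow K G k) ≤ 2 * k - 1) :
    ∃ M : Finset (Sym2 σ), IsKMatching G M k ∧
      ∀ v : σ, v ∉ mVerts M → ∃ w ∈ mVerts M, G.Adj v w := by
  by_contra! hdom
  obtain ⟨M, hM⟩ := exists_isKMatching_of_le_matchNum hk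
  have hlq := hlq.elim id fun hG ↦ hasLinearQuotients_matchPow_of_isChordal_compl K hG k
  have hle : 2 * k ≤ qdepth K (matchPow K G k) := by
    refine two_mul_le_qdepth_matchPow (by lia) ⟨_, M, hM, rfl⟩ hlq ?_
    rintro _ ⟨N, hN, rfl⟩
    exact hdom N hN
  lia

/-- Let `G` be a graph on `[n]` with no isolated vertices and
`1 ≤ k ≤ ν(G)` such that `I(G)^{[k]}` has linear quotients (in particular, this
applies whenever `G` is cochordal). If `depth(S/I(G)^{[k]}) = 2k − 1`, then `G`
has a dominating `k`-matching. -/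
theorem dominating_matching_of_min_depth {K : Type*} [Field K] {n : ℕ}
    (G : SimpleGraph (Fin n))
    (hiso : ∀ v : Fin n, ∃ w, G.Adj v w)
    (k : ℕ) (hk1 : 1 ≤ k) (hk : k ≤ matchNum G)
    (hlq : HasLinearQuotients K (matchPow K G k) ∨ IsChordal Gᶜ)
    (hdepth : qdepth K (matchPow K G k) = 2 * k - 1) :
    ∃ M : Finset (Sym2 (Fin n)), IsKMatching G M k ∧
      ∀ v : Fin n, v ∉ mVerts M → ∃ w ∈ mVerts M, G.Adj v w :=
  dominating_matching_of_min_depth_general G k hk1 hk hlq hdepth.le
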